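/- Adopt the setup in the context, and suppose A, B, C ∈ Σ_k* are nonempty words whose lengths are multiples of a, such that A has no leading zeros, γ_j(ABC) = γ, and δ(1, A) = δ(1, AB) = δ(1, ABC). Then for every integer m ≥ 1, γ_j(AB^mC) = γ, where AB^mC denotes the concatenation of A, m copies of B, and C. -/

import Mathlib

open Filter

/-- The finset of all words of length `n` over the alphabet `Σ_k = {0, …, k-1}`,
represented as lists of natural numbers (most significant digit first). -/
def kwords (k n : ℕ) : Finset (List ℕ) :=
  Finset.image (fun g : Fin n → Fin k => List.ofFn (fun i => (g i : ℕ))) Finset.univ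

/-- `wordVal k w` is `[w]_k`, the natural number obtained by evaluating the word `w`
as a base-`k` numeral (most significant digit first), with `[ε]_k = 0`. -/
def wordVal (k : ℕ) (w : List ℕ) : ℕ := w.foldl (fun acc d => k * acc + d) 0

/-- `sWord k g w = ∑_{v ≺ w, |v| = |w|} g v`, where `≺` is the lexicographic (equivalently,
numeric-value) strict order on words of equal length over `Σ_k`. -/
def sWord (k : ℕ) (g : List ℕ → ℚ) (w : List ℕ) : ℚ :=
  ∑ v ∈ (kwords k w.length).filter (fun v => wordVal k v < wordVal k w), g v

/-- The filter of words `w` over `Σ_k` with `|w| ≡ j (mod a)`, as `|w| → ∞`. -/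
def wordFilter (k a j : ℕ) : Filter (List ℕ) :=
  (Filter.atTop.comap List.length) ⊓
    Filter.principal {w : List ℕ | (∀ x ∈ w, x < k) ∧ w.length % a = j}

/-- `gammaJ k a j s u` is `γ_j(u)`: the limit superior of `s([uw]_k)/[uw]_k` over words `w`
over `Σ_k` with `|w| ≡ j (mod a)`, as `|w| → ∞`. -/
noncomputable def gammaJ (k a j : ℕ) (s : ℕ → ℚ) (u : List ℕ) : ℝ :=
  Filter.limsup
    (fun w : List ℕ => (s (wordVal k (u ++ w)) : ℝ) / (wordVal k (u ++ w)))
    (wordFilter k a j)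


lemma wordVal_eq_ofDigits (k : ℕ) (w : List ℕ) : wordVal k w = Nat.ofDigits k w.reverse := by
  unfold wordVal
  rw [Nat.ofDigits_eq_foldr, List.foldr_reverse]
  simp only [Nat.cast_id, add_comm]

lemma wordVal_append (k : ℕ) (u w : List ℕ) :
    wordVal k (u ++ w) = wordVal k u * k ^ w.length + wordVal k w := by
  simp only [wordVal_eq_ofDigits, List.reverse_append, Nat.ofDigits_append, List.length_reverse]
  ring

lemma wordVal_cons (k x : ℕ) (w : List ℕ) :
    wordVal k (x :: w) = x * k ^ w.length + wordVal k w := by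
  have := wordVal_append k [x] w
  simpa [wordVal] using this

lemma wordVal_lt (k : ℕ) (hk : 2 ≤ k) (w : List ℕ) (hw : ∀ x ∈ w, x < k) :
    wordVal k w < k ^ w.length := by
  rw [wordVal_eq_ofDigits, ← List.length_reverse]
  exact Nat.ofDigits_lt_base_pow_length (by omega) (by simpa using hw)

lemma digits_wordVal (k : ℕ) (hk : 2 ≤ k) (w : List ℕ) (hw : ∀ x ∈ w, x < k)
    (h0 : w.head? ≠ some 0) : (Nat.digits k (wordVal k w)).reverse = w := by
  rw [wordVal_eq_ofDigits, Nat.digits_ofDigits k (by omega) _ (by simpa using hw)]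
  · simp
  · intro h hh
    apply h0
    rw [List.getLast_reverse] at hh
    rw [← hh]
    exact List.head?_eq_some_head _

lemma mem_kwords (k n : ℕ) (v : List ℕ) :
    v ∈ kwords k n ↔ v.length = n ∧ ∀ x ∈ v, x < k := by
  unfold kwords
  simp only [Finset.mem_image, Finset.mem_univ, true_and]
  constructor
  · rintro ⟨g, rfl⟩
    simp [List.mem_ofFn]
  · rintro ⟨rfl, h⟩
    refine ⟨fun i => ⟨v[i], h _ (by simp)⟩, ?_⟩
    simp

lemma sum_kwords_succ (k n : ℕ) (F : List ℕ → ℚ) :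
    ∑ v ∈ kwords k (n + 1), F v = ∑ y ∈ Finset.range k, ∑ v ∈ kwords k n, F (y :: v) := by
  rw [← Finset.sum_product']
  symm
  refine Finset.sum_bij (fun p _ => p.1 :: p.2) ?_ ?_ ?_ ?_
  · rintro ⟨y, v⟩ h
    simp only [Finset.mem_product, Finset.mem_range, mem_kwords] at h
    simp only [mem_kwords, List.length_cons, List.mem_cons]
    refine ⟨by omega, ?_⟩
    rintro x (rfl | hx)
    · exact h.1
    · exact h.2.2 x hx
  · rintro ⟨y, v⟩ _ ⟨y', v'⟩ _ h
    simpa using h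
  · intro v hv
    rw [mem_kwords] at hv
    obtain ⟨h1, h2⟩ := hv
    cases v with
    | nil => simp at h1
    | cons y v =>
      refine ⟨(y, v), ?_, rfl⟩
      simp only [Finset.mem_product, Finset.mem_range, mem_kwords]
      exact ⟨h2 y (by simp), by simpa using h1, fun x hx => h2 x (by simp [hx])⟩
  · intros; rfl

lemma sWord_cons (k : ℕ) (hk : 2 ≤ k) (g : List ℕ → ℚ) (x : ℕ) (hx : x < k) (w : List ℕ)
    (hw : ∀ x ∈ w, x < k) :
    sWord k g (x :: w) = ∑ y ∈ Finset.range x, ∑ v ∈ kwords k w.length, g (y :: v)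
      + sWord k (fun v => g (x :: v)) w := by
  unfold sWord
  rw [Finset.sum_filter, List.length_cons, sum_kwords_succ]
  have hwl := wordVal_lt k hk w hw
  have hsub : Finset.range (x + 1) ⊆ Finset.range k := by
    intro y; simp only [Finset.mem_range]; omega
  rw [← Finset.sum_subset hsub, Finset.sum_range_succ]
  · congr 1
    · refine Finset.sum_congr rfl fun y hy => Finset.sum_congr rfl fun v hv => ?_
      rw [mem_kwords] at hv
      have hvl := wordVal_lt k hk v hv.2
      rw [Finset.mem_range] at hy
      rw [if_pos]
      rw [wordVal_cons, wordVal_cons]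
      rw [hv.1] at hvl ⊢
      nlinarith [Nat.mul_le_mul_right (k ^ w.length) (show y + 1 ≤ x by omega)]
    · rw [Finset.sum_filter]
      refine Finset.sum_congr rfl fun v hv => ?_
      rw [mem_kwords] at hv
      rw [wordVal_cons, wordVal_cons, hv.1]
      simp
  · intro y _ hy
    refine Finset.sum_eq_zero fun v hv => ?_
    rw [mem_kwords] at hv
    rw [if_neg]
    rw [wordVal_cons, wordVal_cons, hv.1]
    simp only [Finset.mem_range] at hy
    nlinarith [Nat.mul_le_mul_right (k ^ w.length) (show x + 1 ≤ y by omega)]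

/-- total mass of words of length `n` -/
def Tot (k : ℕ) (g : List ℕ → ℚ) (n : ℕ) : ℚ := ∑ v ∈ kwords k n, g v

/-- contribution of a prefix -/
def pre {d : ℕ} (k : ℕ) (f : Fin d → List ℕ → ℚ) (δ : Fin d → ℕ → Fin d) :
    Fin d → List ℕ → ℕ → ℚ
  | _, [], _ => 0
  | i, x :: u, n => ∑ y ∈ Finset.range x, Tot k (f (δ i y)) (u.length + n)
      + pre k f δ (δ i x) u n

lemma sWord_append {d : ℕ} (k : ℕ) (hk : 2 ≤ k) (f : Fin d → List ℕ → ℚ) (δ : Fin d → ℕ → Fin d)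
    (hδ : ∀ i : Fin d, ∀ x < k, ∀ w, f i (x :: w) = f (δ i x) w)
    (u w : List ℕ) (hu : ∀ x ∈ u, x < k) (hw : ∀ x ∈ w, x < k) (i : Fin d) :
    sWord k (f i) (u ++ w) = pre k f δ i u w.length + sWord k (f (u.foldl δ i)) w := by
  induction u generalizing i with
  | nil => simp [pre]
  | cons x u ih =>
    have hx : x < k := hu x (by simp)
    have hu' : ∀ x ∈ u, x < k := fun y hy => hu y (by simp [hy])
    rw [List.cons_append, sWord_cons k hk _ x hx]
    · have : (fun v => f i (x :: v)) = f (δ i x) := by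
        funext v; exact hδ i x hx v
      rw [this, ih hu' (δ i x), pre, List.foldl_cons, List.length_append, ← add_assoc]
      congr 2
      refine Finset.sum_congr rfl fun y hy => Finset.sum_congr rfl fun v hv => ?_
      rw [Finset.mem_range] at hy
      exact hδ i y (by omega) v
    · intro y hy
      rcases List.mem_append.1 hy with h | h
      · exact hu' y h
      · exact hw y h

lemma sWord_pow {d : ℕ} (k : ℕ) (hk : 2 ≤ k) (f : Fin d → List ℕ → ℚ) (δ : Fin d → ℕ → Fin d)
    (hδ : ∀ i : Fin d, ∀ x < k, ∀ w, f i (x :: w) = f (δ i x) w) (i : Fin d) (N : ℕ) :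
    sWord k (f i) ((Nat.digits k (k ^ N)).reverse) = Tot k (f (δ i 0)) N := by
  have hz : wordVal k (List.replicate N 0) = 0 := by
    induction N with
    | zero => rfl
    | succ n ih => rw [List.replicate_succ, wordVal_cons, ih]; simp
  have hv : k ^ N = wordVal k (1 :: List.replicate N 0) := by
    rw [wordVal_cons, hz]; simp
  have hzd : ∀ x ∈ List.replicate N 0, x < k := by
    intro x hx; rw [List.eq_of_mem_replicate hx]; omega
  rw [hv, digits_wordVal k hk _ _ (by simp)]
  · rw [sWord_cons k hk _ 1 (by omega) _ hzd]
    have : sWord k (fun v => f i (1 :: v)) (List.replicate N 0) = 0 := by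
      unfold sWord; rw [hz]; simp
    rw [this]
    simp only [Finset.range_one, Finset.sum_singleton, add_zero, List.length_replicate, Tot]
    exact Finset.sum_congr rfl fun v _ => hδ i 0 (by omega) v
  · intro x hx
    rcases List.mem_cons.1 hx with h | h
    · omega
    · exact hzd x h

lemma Tot_succ {d : ℕ} (k : ℕ) (f : Fin d → List ℕ → ℚ) (δ : Fin d → ℕ → Fin d)
    (hδ : ∀ i : Fin d, ∀ x < k, ∀ w, f i (x :: w) = f (δ i x) w) (i : Fin d) (n : ℕ) :
    Tot k (f i) (n + 1) = ∑ y ∈ Finset.range k, Tot k (f (δ i y)) n := by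
  unfold Tot
  rw [sum_kwords_succ]
  refine Finset.sum_congr rfl fun y hy => Finset.sum_congr rfl fun v hv => ?_
  exact hδ i y (by simpa using hy) v

lemma f_bound {d : ℕ} (k : ℕ) (f : Fin d → List ℕ → ℚ) (δ : Fin d → ℕ → Fin d)
    (hnn : ∀ i w, 0 ≤ f i w)
    (hδ : ∀ i : Fin d, ∀ x < k, ∀ w, f i (x :: w) = f (δ i x) w) (w : List ℕ)
    (hw : ∀ x ∈ w, x < k) (i : Fin d) : f i w ≤ ∑ i, f i [] := by
  induction w generalizing i with
  | nil => exact Finset.single_le_sum (f := fun i => f i []) (fun i _ => hnn i []) (Finset.mem_univ i)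
  | cons x w ih =>
    rw [hδ i x (hw x (by simp))]
    exact ih (fun y hy => hw y (by simp [hy])) _

lemma card_kwords (k n : ℕ) : (kwords k n).card ≤ k ^ n := by
  refine Finset.card_image_le.trans ?_
  simp

lemma Tot_nonneg {d : ℕ} (k : ℕ) (f : Fin d → List ℕ → ℚ) (hnn : ∀ i w, 0 ≤ f i w)
    (i : Fin d) (n : ℕ) : 0 ≤ Tot k (f i) n := Finset.sum_nonneg fun _ _ => hnn _ _

lemma Tot_le {d : ℕ} (k : ℕ) (f : Fin d → List ℕ → ℚ) (δ : Fin d → ℕ → Fin d)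
    (hnn : ∀ i w, 0 ≤ f i w)
    (hδ : ∀ i : Fin d, ∀ x < k, ∀ w, f i (x :: w) = f (δ i x) w) (i : Fin d) (n : ℕ) :
    Tot k (f i) n ≤ (∑ i, f i []) * k ^ n := by
  have h1 : Tot k (f i) n ≤ (kwords k n).card • (∑ i, f i []) :=
    Finset.sum_le_card_nsmul _ _ _ fun v hv => f_bound k f δ hnn hδ v ((mem_kwords k n v).1 hv).2 i
  have h0 : 0 ≤ ∑ i, f i [] := Finset.sum_nonneg fun _ _ => hnn _ _
  have hc : ((kwords k n).card : ℚ) ≤ (k : ℚ) ^ n := by exact_mod_cast card_kwords k n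
  rw [nsmul_eq_mul] at h1
  nlinarith

lemma sWord_le {d : ℕ} (k : ℕ) (f : Fin d → List ℕ → ℚ) (δ : Fin d → ℕ → Fin d)
    (hnn : ∀ i w, 0 ≤ f i w)
    (hδ : ∀ i : Fin d, ∀ x < k, ∀ w, f i (x :: w) = f (δ i x) w) (i : Fin d) (w : List ℕ) :
    sWord k (f i) w ≤ (∑ i, f i []) * k ^ w.length :=
  (Finset.sum_le_sum_of_subset_of_nonneg (Finset.filter_subset _ _) fun _ _ _ => hnn _ _).trans
    (Tot_le k f δ hnn hδ i w.length)

lemma ratio_bound {d : ℕ} (k : ℕ) (hk : 2 ≤ k) (f : Fin d → List ℕ → ℚ) (δ : Fin d → ℕ → Fin d)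
    (hnn : ∀ i w, 0 ≤ f i w)
    (hδ : ∀ i : Fin d, ∀ x < k, ∀ w, f i (x :: w) = f (δ i x) w) (i : Fin d) (n : ℕ) :
    ((sWord k (f i) ((Nat.digits k n).reverse) : ℚ) : ℝ) / n ≤ ((∑ i, f i [] : ℚ) : ℝ) * k := by
  have h0 : 0 ≤ ∑ i, f i [] := Finset.sum_nonneg fun _ _ => hnn _ _
  rcases Nat.eq_zero_or_pos n with rfl | hn
  · simp only [Nat.cast_zero, div_zero]
    exact mul_nonneg (by exact_mod_cast h0) (by positivity)
  · have h1 := sWord_le k f δ hnn hδ i ((Nat.digits k n).reverse)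
    rw [List.length_reverse] at h1
    have h2 : k ^ (Nat.digits k n).length ≤ k * n :=
      Nat.base_pow_length_digits_le k n (by omega) (by omega)
    have h3 : (k : ℚ) ^ (Nat.digits k n).length ≤ k * n := by exact_mod_cast h2
    rw [div_le_iff₀ (by exact_mod_cast hn)]
    have h4 := h1.trans (mul_le_mul_of_nonneg_left h3 h0)
    rw [← mul_assoc] at h4
    exact_mod_cast h4

/-- quasi-periodicity -/
def QP (k b : ℕ) (g : ℕ → ℝ) : Prop :=
  Tendsto (fun n => (g (n + b) - (k : ℝ) ^ b * g n) / (k : ℝ) ^ n) atTop (nhds 0)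

lemma QP.add {k b : ℕ} {g h : ℕ → ℝ} (hg : QP k b g) (hh : QP k b h) :
    QP k b (fun n => g n + h n) := by
  have := Tendsto.add hg hh
  rw [add_zero] at this
  refine this.congr fun n => ?_
  ring

lemma QP.sub {k b : ℕ} {g h : ℕ → ℝ} (hg : QP k b g) (hh : QP k b h) :
    QP k b (fun n => g n - h n) := by
  have := Tendsto.sub hg hh
  rw [sub_zero] at this
  refine this.congr fun n => ?_
  ring

lemma QP.pow (k b : ℕ) (c : ℝ) : QP k b (fun n => c * (k : ℝ) ^ n) := by
  unfold QP
  refine tendsto_const_nhds.congr fun n => ?_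
  beta_reduce
  rw [pow_add]
  ring

lemma QP.sum {k b : ℕ} {ι : Type*} (t : Finset ι) (g : ι → ℕ → ℝ) (hg : ∀ i ∈ t, QP k b (g i)) :
    QP k b (fun n => ∑ i ∈ t, g i n) := by
  have := tendsto_finsetSum t (fun i hi => hg i hi)
  rw [Finset.sum_const_zero] at this
  refine this.congr fun n => ?_
  rw [← Finset.sum_div, Finset.sum_sub_distrib, Finset.mul_sum]

lemma QP.shift {k b : ℕ} (hk : 2 ≤ k) {g : ℕ → ℝ} (hg : QP k b g) (m : ℕ) :
    QP k b (fun n => g (m + n)) := by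
  have h1 : Tendsto (fun n : ℕ => m + n) atTop atTop := 
    tendsto_atTop_mono (fun n => Nat.le_add_left n m) tendsto_id
  have := (Tendsto.comp hg h1).const_mul ((k : ℝ) ^ m)
  rw [mul_zero] at this
  have hk0 : (k : ℝ) ≠ 0 := by positivity
  refine this.congr fun n => ?_
  simp only [Function.comp, pow_add, add_assoc]
  field_simp

lemma QP.mul {k b : ℕ} (hk : 2 ≤ k) {g : ℕ → ℝ} (hg : QP k b g) (m : ℕ) : QP k (m * b) g := by
  induction m with
  | zero =>
    unfold QP
    refine tendsto_const_nhds.congr fun n => ?_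
    simp
  | succ m ih =>
    have h2 := hg.shift hk (m * b)
    have := Tendsto.add h2 (Tendsto.const_mul ((k : ℝ) ^ b) ih)
    rw [mul_zero, add_zero] at this
    refine this.congr fun n => ?_
    have e1 : m * b + (n + b) = n + (m + 1) * b := by ring
    have e2 : m * b + n = n + m * b := by ring
    beta_reduce
    rw [e1, e2, add_mul, one_mul, pow_add]
    ring

lemma contraction {d k : ℕ} (hk : 2 ≤ k) (δ : Fin d → ℕ → Fin d) (e : Fin d → ℕ → ℝ) (M : ℝ)
    (hM : ∀ i n, |e i n| ≤ M)
    (hrec : ∀ i n, (k : ℝ) * |e i (n + 1)| ≤ ∑ y ∈ Finset.range k, |e (δ i y) n|)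
    (h0 : ∀ i, Tendsto (e (δ i 0)) atTop (nhds 0)) (i : Fin d) :
    Tendsto (e i) atTop (nhds 0) := by
  obtain ⟨l, rfl⟩ : ∃ l, k = l + 1 := ⟨k - 1, by omega⟩
  have hl : (0 : ℝ) < (l : ℝ) + 1 := by positivity
  set θ : ℝ := (l : ℝ) / (l + 1) with hθ
  have hθ0 : 0 ≤ θ := by positivity
  have hθ1 : θ < 1 := by rw [hθ, div_lt_one hl]; linarith
  have key : ∀ m : ℕ, ∀ ε > 0, ∀ᶠ n in atTop, ∀ i, |e i n| ≤ θ ^ m * M + ε := by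
    intro m
    induction m with
    | zero =>
      intro ε hε
      refine Eventually.of_forall fun n i => ?_
      have := hM i n
      rw [pow_zero, one_mul]; linarith
    | succ m ih =>
      intro ε hε
      have h1 : ∀ᶠ n in atTop, ∀ i, |e (δ i 0) n| ≤ ε := by
        rw [eventually_all]
        intro i
        have := (h0 i).abs
        rw [abs_zero] at this
        exact this.eventually (ge_mem_nhds hε)
      obtain ⟨N, hN⟩ := eventually_atTop.1 ((ih ε hε).and h1)
      rw [eventually_atTop]
      refine ⟨N + 1, fun n hn i => ?_⟩
      obtain ⟨n, rfl⟩ : ∃ p, n = p + 1 := ⟨n - 1, by omega⟩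
      obtain ⟨ha, hb⟩ := hN n (by omega)
      have hr := hrec i n
      rw [Finset.sum_range_succ'] at hr
      have hs : ∑ y ∈ Finset.range l, |e (δ i (y + 1)) n| ≤ (Finset.range l).card • (θ ^ m * M + ε) :=
        Finset.sum_le_card_nsmul _ _ _ fun y _ => ha _
      rw [Finset.card_range, nsmul_eq_mul] at hs
      have hb' := hb i
      push_cast at hr
      have h5 : ((l : ℝ) + 1) * |e i (n + 1)| ≤ ((l : ℝ) + 1) * (θ ^ (m + 1) * M + ε) := by
        have : ((l : ℝ) + 1) * (θ ^ (m + 1) * M + ε) = l * (θ ^ m * M + ε) + ε := by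
          have : ((l : ℝ) + 1) * θ = l := by rw [hθ]; field_simp
          rw [pow_succ]
          linear_combination (θ ^ m * M) * this
        rw [this]; linarith
      exact le_of_mul_le_mul_left h5 hl
  rw [Metric.tendsto_nhds]
  intro ε hε
  have hlim : Tendsto (fun m : ℕ => θ ^ m * M) atTop (nhds 0) := by
    have := (tendsto_pow_atTop_nhds_zero_of_lt_one hθ0 hθ1).mul_const M
    rwa [zero_mul] at this
  obtain ⟨m, hm⟩ := (hlim.eventually (gt_mem_nhds (half_pos hε))).exists
  filter_upwards [key m (ε / 2) (half_pos hε)] with n hn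
  rw [Real.dist_eq, sub_zero]
  have := hn i
  linarith

lemma Tot_QP {d : ℕ} (k a : ℕ) (hk : 2 ≤ k) (ha : 1 ≤ a)
    (f : Fin d → List ℕ → ℚ) (δ : Fin d → ℕ → Fin d)
    (hnn : ∀ i w, 0 ≤ f i w)
    (hδ : ∀ i : Fin d, ∀ x < k, ∀ w, f i (x :: w) = f (δ i x) w)
    (hperron : ∃ (β C₀ : ℝ), 0 < β ∧ β < (k : ℝ) ∧ 0 < C₀ ∧ ∃ c : Fin d → ℕ → ℚ,
      ∀ i : Fin d, ∀ j < a, ∀ n : ℕ,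
        |(sWord k (f i) ((Nat.digits k (k ^ (a * n + j))).reverse) : ℝ) -
            (c i j : ℝ) * (k : ℝ) ^ (a * n + j)| ≤ C₀ * β ^ (a * n)) (i : Fin d) :
    QP k a (fun n => (Tot k (f i) n : ℝ)) := by
  have hk0 : (0 : ℝ) < k := by positivity
  have hk1 : (1 : ℝ) ≤ k := by exact_mod_cast (by omega : 1 ≤ k)
  set M : ℝ := ((∑ i, f i [] : ℚ) : ℝ) with hMdef
  have hT0 : ∀ i n, (0 : ℝ) ≤ Tot k (f i) n := fun i n => by exact_mod_cast Tot_nonneg k f hnn i n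
  have hT1 : ∀ i n, (Tot k (f i) n : ℝ) ≤ M * k ^ n := fun i n => by
    rw [hMdef]; exact_mod_cast Tot_le k f δ hnn hδ i n
  refine contraction (k := k) hk δ
    (fun i n => ((Tot k (f i) (n + a) : ℝ) - (k : ℝ) ^ a * Tot k (f i) n) / (k : ℝ) ^ n)
    (M * k ^ a) ?_ ?_ ?_ i
  · intro i n
    rw [abs_div, abs_of_pos (pow_pos hk0 n), div_le_iff₀ (pow_pos hk0 n)]
    have h1 := hT1 i (n + a)
    have h2 := mul_le_mul_of_nonneg_left (hT1 i n) (pow_pos hk0 a).le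
    have h3 := mul_nonneg (pow_pos hk0 a).le (hT0 i n)
    have h4 := hT0 i (n + a)
    rw [pow_add] at h1
    rw [abs_le]
    constructor <;> nlinarith
  · intro i n
    have h1 : (Tot k (f i) (n + 1) : ℝ) = ∑ y ∈ Finset.range k, (Tot k (f (δ i y)) n : ℝ) := by
      rw [Tot_succ k f δ hδ]; push_cast; rfl
    have h2 : (Tot k (f i) (n + 1 + a) : ℝ)
        = ∑ y ∈ Finset.range k, (Tot k (f (δ i y)) (n + a) : ℝ) := by
      rw [show n + 1 + a = n + a + 1 by ring, Tot_succ k f δ hδ]; push_cast; rfl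
    refine le_trans (le_of_eq ?_) (Finset.abs_sum_le_sum_abs _ _)
    rw [h1, h2, ← Finset.sum_div, Finset.sum_sub_distrib, ← Finset.mul_sum]
    nth_rewrite 1 [← abs_of_pos hk0]
    rw [← abs_mul]
    congr 1
    rw [pow_succ]
    field_simp
  · intro i
    obtain ⟨β, C₀, hβ, hβk, hC, c, hc⟩ := hperron
    have hb : ∀ N : ℕ, |((Tot k (f (δ i 0)) (N + a) : ℝ) - (k : ℝ) ^ a * Tot k (f (δ i 0)) N)
        / (k : ℝ) ^ N| ≤ (C₀ * β ^ a + k ^ a * C₀) * ((β / k) ^ a) ^ (N / a) := by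
      intro N
      have h1 := hc i (N % a) (Nat.mod_lt _ ha) (N / a)
      have h2 := hc i (N % a) (Nat.mod_lt _ ha) (N / a + 1)
      rw [sWord_pow k hk f δ hδ, Nat.div_add_mod] at h1
      rw [sWord_pow k hk f δ hδ, show a * (N / a + 1) + N % a = N + a by
        have := Nat.div_add_mod N a
        rw [mul_add]; omega] at h2
      have hkN : (k : ℝ) ^ (a * (N / a)) ≤ k ^ N := pow_le_pow_right₀ hk1 (Nat.mul_div_le N a)
      rw [abs_div, abs_of_pos (pow_pos hk0 N), div_le_iff₀ (pow_pos hk0 N), ← pow_mul, div_pow]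
      have h3 : |((Tot k (f (δ i 0)) (N + a) : ℝ) - (k : ℝ) ^ a * Tot k (f (δ i 0)) N)|
          ≤ (C₀ * β ^ a + k ^ a * C₀) * β ^ (a * (N / a)) := by
        have e : ((Tot k (f (δ i 0)) (N + a) : ℝ) - (k : ℝ) ^ a * Tot k (f (δ i 0)) N)
          = (Tot k (f (δ i 0)) (N + a) - c i (N % a) * k ^ (N + a))
            - k ^ a * (Tot k (f (δ i 0)) N - c i (N % a) * k ^ N) := by
          rw [pow_add]; ring
        rw [e]
        refine (abs_sub _ _).trans ?_
        rw [abs_mul, abs_of_pos (pow_pos hk0 a)]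
        have h4 := mul_le_mul_of_nonneg_left h1 (pow_pos hk0 a).le
        rw [mul_add, mul_one, pow_add β] at h2
        linarith
      refine h3.trans ?_
      rw [mul_assoc]
      refine mul_le_mul_of_nonneg_left ?_ (by positivity)
      rw [div_mul_eq_mul_div, le_div_iff₀ (by positivity)]
      exact mul_le_mul_of_nonneg_left hkN (by positivity)
    refine squeeze_zero_norm hb ?_
    have hq : Tendsto (fun n : ℕ => ((β / k) ^ a) ^ n) atTop (nhds 0) :=
      tendsto_pow_atTop_nhds_zero_of_lt_one (by positivity)
        (pow_lt_one₀ (by positivity) ((div_lt_one hk0).2 hβk) (by omega))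
    have := (hq.comp (Nat.tendsto_div_const_atTop (n := a) (by omega))).const_mul
      (C₀ * β ^ a + k ^ a * C₀)
    rwa [mul_zero] at this

lemma pre_QP {d : ℕ} (k b : ℕ) (hk : 2 ≤ k)
    (f : Fin d → List ℕ → ℚ) (δ : Fin d → ℕ → Fin d)
    (hT : ∀ i, QP k b (fun n => (Tot k (f i) n : ℝ))) (u : List ℕ) (i : Fin d) :
    QP k b (fun n => (pre k f δ i u n : ℝ)) := by
  induction u generalizing i with
  | nil =>
    have := QP.pow k b 0
    simpa [pre] using this
  | cons x u ih =>
    simp only [pre, Rat.cast_add, Rat.cast_sum]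
    exact (QP.sum _ (fun y n => (Tot k (f (δ i y)) (u.length + n) : ℝ))
      fun y _ => (hT (δ i y)).shift hk u.length).add (ih _)

lemma tendsto_length_wordFilter (k a j : ℕ) : Tendsto List.length (wordFilter k a j) atTop :=
  tendsto_comap.mono_left inf_le_left

lemma eventually_wordFilter (k a j : ℕ) : ∀ᶠ w in wordFilter k a j, ∀ x ∈ w, x < k := by
  have : ∀ᶠ w in wordFilter k a j, w ∈ {w : List ℕ | (∀ x ∈ w, x < k) ∧ w.length % a = j} :=
    mem_inf_of_right (mem_principal_self _)
  exact this.mono fun w h => h.1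

lemma wordFilter_neBot (k a j : ℕ) (hk : 2 ≤ k) (hj : j < a) : (wordFilter k a j).NeBot := by
  rw [wordFilter, inf_principal_neBot_iff]
  intro U hU
  obtain ⟨t, ht, htU⟩ := mem_comap.1 hU
  obtain ⟨N, hN⟩ := mem_atTop_sets.1 ht
  refine ⟨List.replicate (a * N + j) 0, htU ?_, ?_, ?_⟩
  · apply hN
    simp only [List.length_replicate]
    nlinarith
  · intro x hx; rw [List.eq_of_mem_replicate hx]; omega
  · simp [Nat.mod_eq_of_lt hj]
theorem gamma_pump_many
    (k d a : ℕ) (hk : 2 ≤ k) (hd : 0 < d) (ha : 1 ≤ a)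
    (f : Fin d → List ℕ → ℚ) (δ : Fin d → ℕ → Fin d)
    (hnn : ∀ i w, 0 ≤ f i w)
    (hzero : ∀ w, f ⟨0, hd⟩ (0 :: w) = f ⟨0, hd⟩ w)
    (hδ : ∀ i : Fin d, ∀ x < k, ∀ w, f i (x :: w) = f (δ i x) w)
    (s : ℕ → ℚ) (hs : ∀ n, s n = sWord k (f ⟨0, hd⟩) ((Nat.digits k n).reverse))
    (γ : ℝ) (hγdef : γ = Filter.atTop.limsup (fun n : ℕ => (s n : ℝ) / n)) (hγ : 0 < γ)
    (hperron : ∃ (β C₀ : ℝ), 0 < β ∧ β < (k : ℝ) ∧ 0 < C₀ ∧ ∃ c : Fin d → ℕ → ℚ,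
      ∀ i : Fin d, ∀ j < a, ∀ n : ℕ,
        |(sWord k (f i) ((Nat.digits k (k ^ (a * n + j))).reverse) : ℝ) -
            (c i j : ℝ) * (k : ℝ) ^ (a * n + j)| ≤ C₀ * β ^ (a * n))
    (j : ℕ) (hj : j < a)
    (A B C : List ℕ)
    (hAne : A ≠ []) (hBne : B ≠ []) (hCne : C ≠ [])
    (hAdig : ∀ x ∈ A, x < k) (hBdig : ∀ x ∈ B, x < k) (hCdig : ∀ x ∈ C, x < k)
    (hAlen : a ∣ A.length) (hBlen : a ∣ B.length) (hClen : a ∣ C.length)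
    (hAlead : A.head? ≠ some 0)
    (hδA : A.foldl δ ⟨0, hd⟩ = (A ++ B).foldl δ ⟨0, hd⟩)
    (hδAB : (A ++ B).foldl δ ⟨0, hd⟩ = (A ++ B ++ C).foldl δ ⟨0, hd⟩)
    (hgam : gammaJ k a j s (A ++ B ++ C) = γ) :
    ∀ m : ℕ, 1 ≤ m → gammaJ k a j s (A ++ (List.replicate m B).flatten ++ C) = γ := by
  have hk0 : (0 : ℝ) < k := by positivity
  have hkn : (k : ℝ) ≠ 0 := hk0.ne'
  have := wordFilter_neBot k a j hk hj
  -- numerals starting with `A`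
  have hhead : ∀ X : List ℕ, (A ++ X).head? ≠ some 0 := by
    intro X
    cases A with
    | nil => exact absurd rfl hAne
    | cons x A => simpa using hAlead
  have hsval : ∀ u : List ℕ, (∀ x ∈ A ++ u, x < k) →
      s (wordVal k (A ++ u)) = sWord k (f ⟨0, hd⟩) (A ++ u) := by
    intro u hu
    rw [hs, digits_wordVal k hk _ hu (hhead u)]
  have hvalpos : ∀ X : List ℕ, 1 ≤ wordVal k (A ++ X) := by
    intro X
    cases A with
    | nil => exact absurd rfl hAne
    | cons x A =>
      have hx : 1 ≤ x := by
        have : x ≠ 0 := by simpa using hAlead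
        omega
      rw [List.cons_append, wordVal_cons]
      have := Nat.mul_le_mul hx (Nat.one_le_pow (A ++ X).length k (by omega))
      omega
  -- the prefixes
  set U : ℕ → List ℕ := fun m => A ++ ((List.replicate m B).flatten ++ C) with hU
  have hflat : ∀ m, ∀ x ∈ (List.replicate m B).flatten, x < k := by
    intro m x hx
    rw [List.mem_flatten] at hx
    obtain ⟨l, hl, hxl⟩ := hx
    rw [List.eq_of_mem_replicate hl] at hxl
    exact hBdig x hxl
  have hUdig : ∀ m, ∀ x ∈ U m, x < k := by
    intro m x hx
    simp only [hU, List.mem_append] at hx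
    rcases hx with h | h | h
    · exact hAdig x h
    · exact hflat m x h
    · exact hCdig x h
  have hUw : ∀ m w, U m ++ w = A ++ ((List.replicate m B).flatten ++ C ++ w) := by
    intro m w; simp [hU]
  have hUval : ∀ m w, (k : ℝ) ^ w.length ≤ wordVal k (U m ++ w) := by
    intro m w
    have h1 := hvalpos ((List.replicate m B).flatten ++ C)
    have h2 : k ^ w.length ≤ wordVal k (U m ++ w) := by
      rw [wordVal_append]
      have := Nat.mul_le_mul_right (k ^ w.length) h1
      simp only [hU]
      omega
    exact_mod_cast h2
  have hUval2 : ∀ m w, (∀ x ∈ w, x < k) →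
      (wordVal k (U m ++ w) : ℝ) ≤ (k : ℝ) ^ (U m).length * (k : ℝ) ^ w.length := by
    intro m w hw
    have h1 := wordVal_lt k hk (U m ++ w) (by
      intro x hx
      rcases List.mem_append.1 hx with h | h
      · exact hUdig m x h
      · exact hw x h)
    rw [List.length_append, pow_add] at h1
    exact_mod_cast h1.le
  -- ratios
  set r : ℕ → List ℕ → ℝ := fun m w => (s (wordVal k (U m ++ w)) : ℝ) / (wordVal k (U m ++ w))
    with hr
  have hgamr : ∀ m, gammaJ k a j s (A ++ (List.replicate m B).flatten ++ C)
      = limsup (r m) (wordFilter k a j) := by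
    intro m
    simp only [gammaJ, hr, hU, List.append_assoc]
  have hbdd : ∀ n : ℕ, (s n : ℝ) / n ≤ ((∑ i, f i [] : ℚ) : ℝ) * k := by
    intro n
    rw [hs]
    exact ratio_bound k hk f δ hnn hδ _ n
  have hs0 : ∀ n : ℕ, 0 ≤ (s n : ℝ) / n := by
    intro n
    have : 0 ≤ s n := by rw [hs]; exact Finset.sum_nonneg fun _ _ => hnn _ _
    exact div_nonneg (by exact_mod_cast this) (by positivity)
  have hrB : ∀ m, (wordFilter k a j).IsBoundedUnder (· ≤ ·) (r m) := fun m =>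
    isBoundedUnder_of ⟨_, fun w => hbdd _⟩
  have hrC : ∀ m, (wordFilter k a j).IsCoboundedUnder (· ≤ ·) (r m) := fun m =>
    IsBoundedUnder.isCoboundedUnder_le (isBoundedUnder_of ⟨0, fun w => hs0 _⟩)
  have hUtend : ∀ m, Tendsto (fun w => wordVal k (U m ++ w)) (wordFilter k a j) atTop := by
    intro m
    refine tendsto_atTop_mono (fun w => ?_) (tendsto_length_wordFilter k a j)
    have h1 := hUval m w
    have h2 : k ^ w.length ≤ wordVal k (U m ++ w) := by exact_mod_cast h1
    exact ((Nat.lt_pow_self (by omega : 1 < k)).le).trans h2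
  have hup : ∀ m, ∀ ε > 0, ∀ᶠ w in wordFilter k a j, r m w < γ + ε := by
    intro m ε hε
    have h1 : ∀ᶠ n : ℕ in atTop, (s n : ℝ) / n < γ + ε :=
      eventually_lt_of_limsup_lt (by rw [← hγdef]; linarith) (isBoundedUnder_of ⟨_, hbdd⟩)
    exact (hUtend m).eventually h1
  -- discrepancies
  set q := A.foldl δ ⟨0, hd⟩ with hq
  have hqB : B.foldl δ q = q := by
    rw [hδA, List.foldl_append]
    rw [List.foldl_append, ← hq] at hδA
    rw [← hq, ← hδA, ← hδA]
  set e : Fin d → List ℕ → ℕ → ℝ :=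
    fun i u n => (pre k f δ i u n : ℝ) - (γ * wordVal k u) * (k : ℝ) ^ n with he
  have heQ : ∀ i u, QP k B.length (e i u) := by
    intro i u
    have h1 : QP k a (e i u) :=
      (pre_QP k a hk f δ (Tot_QP k a hk ha f δ hnn hδ hperron) u i).sub (QP.pow k a _)
    obtain ⟨t, ht⟩ := hBlen
    rw [ht, mul_comm]
    exact h1.mul hk t
  set Δ : ℕ → ℝ := fun n =>
    e ⟨0, hd⟩ A (B.length + n) + e q B n - e ⟨0, hd⟩ A n with hΔ
  have hΔQ : QP k B.length Δ :=
    (((heQ ⟨0, hd⟩ A).shift hk B.length).add (heQ q B)).sub (heQ ⟨0, hd⟩ A)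
  set Y : ℕ → List ℕ → ℝ :=
    fun m w => (s (wordVal k (U m ++ w)) : ℝ) - γ * wordVal k (U m ++ w) with hY
  have hYr : ∀ m w, Y m w = (r m w - γ) * wordVal k (U m ++ w) := by
    intro m w
    have : (wordVal k (U m ++ w) : ℝ) ≠ 0 := by
      exact ((pow_pos hk0 w.length).trans_le (hUval m w)).ne'
    simp only [hY, hr]
    field_simp
  have hstep : ∀ m w, (∀ x ∈ w, x < k) →
      Y (m + 1) w - Y m w = Δ (m * B.length + (C.length + w.length)) := by
    intro m w hw
    set X := (List.replicate m B).flatten ++ C ++ w with hX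
    have hXdig : ∀ x ∈ X, x < k := by
      intro x hx
      simp only [hX, List.mem_append] at hx
      rcases hx with (h | h) | h
      · exact hflat m x h
      · exact hCdig x h
      · exact hw x h
    have hXlen : X.length = m * B.length + (C.length + w.length) := by
      simp [hX, add_assoc]
    have e0 : U m ++ w = A ++ X := hUw m w
    have e1 : U (m + 1) ++ w = A ++ (B ++ X) := by
      simp [hU, hX, List.replicate_succ]
    have hBX : ∀ x ∈ B ++ X, x < k := by
      intro x hx
      rcases List.mem_append.1 hx with h | h
      · exact hBdig x h
      · exact hXdig x h
    have hAX : ∀ x ∈ A ++ X, x < k := by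
      intro x hx
      rcases List.mem_append.1 hx with h | h
      · exact hAdig x h
      · exact hXdig x h
    have hABX : ∀ x ∈ A ++ (B ++ X), x < k := by
      intro x hx
      rcases List.mem_append.1 hx with h | h
      · exact hAdig x h
      · exact hBX x h
    simp only [hY, hΔ, he]
    rw [e0, e1, hsval _ hAX, hsval _ hABX, sWord_append k hk f δ hδ A X hAdig hXdig,
      sWord_append k hk f δ hδ A (B ++ X) hAdig hBX, ← hq,
      sWord_append k hk f δ hδ B X hBdig hXdig, hqB, wordVal_append k A X,
      wordVal_append k A (B ++ X), wordVal_append k B X, List.length_append, ← hXlen]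
    push_cast
    ring
  have hK : ∀ m : ℕ, ∃ K : ℝ, 0 ≤ K ∧ Tendsto
      (fun w => (Y (m + 1) w - Y 1 w - K * (Y 1 w - Y 0 w)) / (k : ℝ) ^ w.length)
      (wordFilter k a j) (nhds 0) := by
    intro m
    induction m with
    | zero =>
      refine ⟨0, le_rfl, tendsto_const_nhds.congr fun w => ?_⟩
      simp
    | succ m ih =>
      obtain ⟨K, hK0, hK⟩ := ih
      refine ⟨K + (k : ℝ) ^ ((m + 1) * B.length), by positivity, ?_⟩
      have h1 := ((hΔQ.mul hk (m + 1)).shift hk C.length)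
      have h2 := Tendsto.comp h1 (tendsto_length_wordFilter k a j)
      have h3 := hK.add h2
      rw [add_zero] at h3
      refine h3.congr' ?_
      filter_upwards [eventually_wordFilter k a j] with w hw
      have s1 := hstep (m + 1) w hw
      have s0 := hstep 0 w hw
      rw [zero_mul, zero_add, zero_add] at s0
      simp only [Function.comp]
      rw [s0, ← add_div]
      congr 1
      rw [show C.length + (w.length + (m + 1) * B.length)
        = (m + 1) * B.length + (C.length + w.length) by ring, ← s1]
      ring
  intro m hm
  rw [hgamr]
  have hgam1 : limsup (r 1) (wordFilter k a j) = γ := by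
    rw [← hgamr, ← hgam]
    simp
  obtain ⟨m, rfl⟩ : ∃ p, m = p + 1 := ⟨m - 1, by omega⟩
  apply le_antisymm
  · refine le_of_forall_pos_le_add fun ε hε => ?_
    exact limsup_le_of_le (hrC _) ((hup (m + 1) ε hε).mono fun w h => h.le)
  · refine le_of_forall_pos_le_add fun η hη => ?_
    rw [← sub_le_iff_le_add]
    refine le_limsup_of_frequently_le ?_ (hrB _)
    obtain ⟨K, hK0, hKt⟩ := hK m
    set ε : ℝ := η / (2 + 2 * K) with hε
    have hε0 : 0 < ε := by positivity
    have hfr : ∃ᶠ w in wordFilter k a j, γ - ε / (k : ℝ) ^ (U 1).length < r 1 w := by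
      refine frequently_lt_of_lt_limsup (hrC 1) ?_
      rw [hgam1]
      have : 0 < ε / (k : ℝ) ^ (U 1).length := by positivity
      linarith
    have hev0 := hup 0 (ε / (k : ℝ) ^ (U 0).length) (by positivity)
    have hevK : ∀ᶠ w in wordFilter k a j,
        -ε < (Y (m + 1) w - Y 1 w - K * (Y 1 w - Y 0 w)) / (k : ℝ) ^ w.length :=
      hKt.eventually (lt_mem_nhds (by linarith))
    refine (hfr.and_eventually (hev0.and (hevK.and (eventually_wordFilter k a j)))).mono ?_
    rintro w ⟨h1, h0, hKw, hw⟩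
    have hL : 0 < (k : ℝ) ^ w.length := pow_pos hk0 _
    rw [lt_div_iff₀ hL] at hKw
    have y1 : -ε * (k : ℝ) ^ w.length ≤ Y 1 w := by
      have hp : 0 < (k : ℝ) ^ (U 1).length := pow_pos hk0 _
      have hv := hUval2 1 w hw
      have hv0 : 0 < (wordVal k (U 1 ++ w) : ℝ) := hL.trans_le (hUval 1 w)
      have h3 : ε / (k : ℝ) ^ (U 1).length * wordVal k (U 1 ++ w) ≤ ε * (k : ℝ) ^ w.length := by
        rw [div_mul_eq_mul_div, div_le_iff₀ hp]
        nlinarith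
      rw [hYr]
      nlinarith
    have y0 : Y 0 w ≤ ε * (k : ℝ) ^ w.length := by
      have hp : 0 < (k : ℝ) ^ (U 0).length := pow_pos hk0 _
      have hv := hUval2 0 w hw
      have hv0 : 0 < (wordVal k (U 0 ++ w) : ℝ) := hL.trans_le (hUval 0 w)
      have h3 : ε / (k : ℝ) ^ (U 0).length * wordVal k (U 0 ++ w) ≤ ε * (k : ℝ) ^ w.length := by
        rw [div_mul_eq_mul_div, div_le_iff₀ hp]
        nlinarith
      rw [hYr]
      nlinarith
    have y2 : -η * (k : ℝ) ^ w.length ≤ Y (m + 1) w := by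
      have hd : K * (Y 1 w - Y 0 w) ≥ K * (-2 * ε * (k : ℝ) ^ w.length) :=
        mul_le_mul_of_nonneg_left (by linarith) hK0
      have hη' : η = ε * (2 + 2 * K) := by rw [hε]; field_simp
      rw [hη']
      nlinarith
    have hv := hUval (m + 1) w
    have hv0 : 0 < (wordVal k (U (m + 1) ++ w) : ℝ) := hL.trans_le hv
    rw [hYr] at y2
    have h6 : -η * (wordVal k (U (m + 1) ++ w) : ℝ) ≤
        (r (m + 1) w - γ) * wordVal k (U (m + 1) ++ w) := by nlinarith
    have := le_of_mul_le_mul_right h6 hv0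
    linarith
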